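/- Fix an integer k ≥ 1 and for 0 ≤ l ≤ k−1 let a_l ∈ Ω be the coefficient of t^l in the expansion Tr(θ(Θ + tθ²)^{k−1}) = Σ_{l=0}^{k−1} a_l t^l, i.e. a_l is the sum of Tr(θ X₁⋯X_{k−1}) over all words X₁,…,X_{k−1} in which exactly l of the letters equal θ² and the remaining k−1−l letters equal Θ. Then ∂̄a₀ = Tr(Θ^k), ∂̄a_l = ((k+l)/l) ∂a_{l−1} for every 1 ≤ l ≤ k−1, and ∂a_{k−1} = 0. -/

import Mathlib

/-- An abstract model of the Dolbeault double complex of `(p,q)`-forms on a complex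
manifold: a bigraded associative `ℂ`-algebra `Ω = ⨁ Ω^{p,q}`, graded-commutative with
respect to total degree, with `ℂ`-linear operators `∂` (`pd`) and `∂̄` (`pdb`) of
bidegrees `(1,0)` and `(0,1)`, squaring to zero and anticommuting, satisfying the
graded Leibniz rule. -/
structure DolbeaultAlgebra (Ω : Type*) [Ring Ω] [Algebra ℂ Ω] where
  /-- the `ℂ`-subspace of elements of bidegree `(p,q)` -/
  deg : ℕ → ℕ → Submodule ℂ Ω
  one_mem : (1 : Ω) ∈ deg 0 0
  mul_mem : ∀ {p q p' q'} {a b : Ω}, a ∈ deg p q → b ∈ deg p' q' →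
    a * b ∈ deg (p + p') (q + q')
  gcomm : ∀ {p q p' q'} (a b : Ω), a ∈ deg p q → b ∈ deg p' q' →
    a * b = ((-1 : ℂ) ^ ((p + q) * (p' + q'))) • (b * a)
  /-- the operator `∂` -/
  pd : Ω →ₗ[ℂ] Ω
  /-- the operator `∂̄` -/
  pdb : Ω →ₗ[ℂ] Ω
  pd_mem : ∀ {p q} {a : Ω}, a ∈ deg p q → pd a ∈ deg (p + 1) q
  pdb_mem : ∀ {p q} {a : Ω}, a ∈ deg p q → pdb a ∈ deg p (q + 1)
  pd_pd : ∀ a : Ω, pd (pd a) = 0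
  pdb_pdb : ∀ a : Ω, pdb (pdb a) = 0
  pd_pdb : ∀ a : Ω, pd (pdb a) + pdb (pd a) = 0
  pd_leibniz : ∀ {p q} (a b : Ω), a ∈ deg p q →
    pd (a * b) = pd a * b + ((-1 : ℂ) ^ (p + q)) • (a * pd b)
  pdb_leibniz : ∀ {p q} (a b : Ω), a ∈ deg p q →
    pdb (a * b) = pdb a * b + ((-1 : ℂ) ^ (p + q)) • (a * pdb b)

namespace DolbeaultAlgebra

variable {Ω : Type*} [Ring Ω] [Algebra ℂ Ω] {r : ℕ}

/-- the entrywise extension of `∂` to `r × r` matrices over `Ω` -/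
def mpd (A : DolbeaultAlgebra Ω) (M : Matrix (Fin r) (Fin r) Ω) :
    Matrix (Fin r) (Fin r) Ω := M.map A.pd

/-- the entrywise extension of `∂̄` to `r × r` matrices over `Ω` -/
def mpdb (A : DolbeaultAlgebra Ω) (M : Matrix (Fin r) (Fin r) Ω) :
    Matrix (Fin r) (Fin r) Ω := M.map A.pdb

/-- the assertion that all entries of a matrix lie in `Ω^{p,q}` -/
def MatDeg (A : DolbeaultAlgebra Ω) (p q : ℕ) (M : Matrix (Fin r) (Fin r) Ω) : Prop :=
  ∀ i j, M i j ∈ A.deg p q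

end DolbeaultAlgebra

variable {Ω : Type*} [Ring Ω] [Algebra ℂ Ω]

/-! Put `X = Θ + tθ²`, a matrix with even, hence mutually commuting, entries. The structure
equations give `∂X = [X, θ]` and `∂̄X = t[X, θ]`, and since odd matrices anticommute under the
trace, `∂ Tr(θXⁿ) = Tr(θ²Xⁿ)` and `∂̄ Tr(θXⁿ) = Tr(Xⁿ⁺¹) + t Tr(θ²Xⁿ)`. As `d/dt Tr(Xⁿ⁺¹)`
equals `(n+1) Tr(θ²Xⁿ)`, comparing coefficients of `tᵐ⁺¹`, with `n + 1 = k`, gives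
`∂̄aₘ₊₁ = ((k + m + 1)/(m + 1)) ∂aₘ` for every `m`. Since `a_k = 0`, the case `m = k - 1` reads
`0 = 2 ∂a_(k-1)`. -/

open Polynomial

section MatrixCalculus

variable {K R n : Type*} [Fintype n]

lemma mapMatrix_mul_of_leibniz [CommRing K] [Ring R] [Algebra K R] {l m : Type*} (D : R →ₗ[K] R)
    (c : K) (M : Matrix l n R) (N : Matrix n m R)
    (h : ∀ i j k, D (M i j * N j k) = D (M i j) * N j k + c • (M i j * D (N j k))) :
    D.mapMatrix (M * N) = D.mapMatrix M * N + c • (M * D.mapMatrix N) := by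
  ext i k
  simp [Matrix.mul_apply, h, Finset.sum_add_distrib, Finset.smul_sum]

lemma trace_mul_eq_neg_of_anticommute [Ring R] {M N : Matrix n n R}
    (h : ∀ i j, M i j * N j i = -(N j i * M i j)) :
    (M * N).trace = -(N * M).trace := by
  simp only [Matrix.trace, Matrix.diag_apply, Matrix.mul_apply, h, Finset.sum_neg_distrib]
  rw [Finset.sum_comm]

lemma trace_map_pow_succ_of_leibniz {S V : Type*} [Ring S] [AddCommGroup V] (τ : S →+ V)
    (hτ : ∀ x y, τ (x * y) = τ (y * x)) (D : S →+ S)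
    (hD : ∀ x y, D (x * y) = D x * y + x * D y) (x : S) (m : ℕ) :
    τ (D (x ^ (m + 1))) = (m + 1) • τ (x ^ m * D x) := by
  suffices h : ∀ j, τ (x ^ j * D (x ^ (m + 1))) = (m + 1) • τ (x ^ (j + m) * D x) by
    simpa using h 0
  induction m with
  | zero => simp
  | succ m ih =>
    intro j
    have hcycle : τ (x ^ j * (D (x ^ (m + 1)) * x)) = τ (x ^ (j + 1) * D (x ^ (m + 1))) := by
      rw [← mul_assoc, hτ, ← mul_assoc, ← pow_succ']
    rw [pow_succ x (m + 1), hD, mul_add, map_add, hcycle, ih, ← mul_assoc, ← pow_add,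
      succ_nsmul _ (m + 1), Nat.add_right_comm j 1 m, add_assoc j m 1]

variable [DecidableEq n]

/-- The matrix pencil `M + tN`, as a matrix of polynomials in the parameter `t`. -/
noncomputable def pencil [CommRing R] (M N : Matrix n n R) : Matrix n n R[X] :=
  C.mapMatrix M + (X : R[X]) • C.mapMatrix N

lemma evalRingHom_mapMatrix_pencil [CommRing R] (M N : Matrix n n R) (t : R) :
    (evalRingHom t).mapMatrix (pencil M N) = M + t • N := by
  ext i j
  simpa [pencil] using mul_comm _ _

lemma derivative_mapMatrix_pencil [CommRing R] (M N : Matrix n n R) :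
    (derivative (R := R)).mapMatrix (pencil M N) = C.mapMatrix N := by
  ext i j : 1
  simp [pencil]

lemma derivative_trace_pencil_pow_succ [CommRing R] (M N : Matrix n n R) (m : ℕ) :
    derivative (pencil M N ^ (m + 1)).trace =
      (m + 1) • (C.mapMatrix N * pencil M N ^ m).trace := by
  have hD (P Q : Matrix n n R[X]) : (derivative (R := R)).mapMatrix (P * Q) =
      (derivative (R := R)).mapMatrix P * Q + P * (derivative (R := R)).mapMatrix Q := by
    simpa using mapMatrix_mul_of_leibniz (derivative (R := R)) 1 P Q (by simp [derivative_mul])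
  rw [AddMonoidHom.map_trace, Matrix.trace_mul_comm, ← derivative_mapMatrix_pencil M N]
  exact trace_map_pow_succ_of_leibniz (Matrix.traceAddMonoidHom n R[X]) Matrix.trace_mul_comm
    (derivative (R := R)).mapMatrix.toAddMonoidHom hD (pencil M N) m

open scoped IsMulCommutative in
lemma exists_polynomial_eval_eq_trace [CommRing K] [Ring R] [Algebra K R] (S : Subalgebra K R)
    [IsMulCommutative S] {M N : Matrix n n R} (hM : M ∈ S.matrix) (hN : N ∈ S.matrix) (m : ℕ) :
    ∃ G H : R[X], derivative G = (m + 1) • H ∧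
      (∀ t : K, G.eval (algebraMap K R t) = ((M + t • N) ^ (m + 1)).trace) ∧
      ∀ t : K, H.eval (algebraMap K R t) = (N * (M + t • N) ^ m).trace := by
  let ι : S →+* R := S.val
  let M' : Matrix n n S := Matrix.of fun i j => ⟨M i j, hM i j⟩
  let N' : Matrix n n S := Matrix.of fun i j => ⟨N i j, hN i j⟩
  have hpencil (t : K) :
      ι.mapMatrix ((evalRingHom (algebraMap K S t)).mapMatrix (pencil M' N')) = M + t • N := by
    rw [evalRingHom_mapMatrix_pencil, algebraMap_smul]
    rfl
  have hN' (t : K) : ι.mapMatrix ((evalRingHom (algebraMap K S t)).mapMatrix (C.mapMatrix N')) =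
      N := by
    ext i j
    simp [ι, N']
  have heval (P : Matrix n n S[X]) (t : K) : (P.trace.map ι).eval (algebraMap K R t) =
      (ι.mapMatrix ((evalRingHom (algebraMap K S t)).mapMatrix P)).trace := by
    rw [eval_map, show algebraMap K R t = ι (algebraMap K S t) from rfl, eval₂_at_apply,
      ← coe_evalRingHom, AddMonoidHom.map_trace, AddMonoidHom.map_trace]
    rfl
  refine ⟨(pencil M' N' ^ (m + 1)).trace.map ι, (C.mapMatrix N' * pencil M' N' ^ m).trace.map ι,
    ?_, fun t => ?_, fun t => ?_⟩
  · rw [derivative_map, derivative_trace_pencil_pow_succ]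
    exact map_nsmul (mapRingHom ι) _ _
  · rw [heval, map_pow, map_pow, hpencil]
  · rw [heval, map_mul, map_mul, map_pow, map_pow, hpencil, hN']

end MatrixCalculus

section CoefficientComparison

variable {K R V : Type*} [Field K]

lemma eq_zero_of_forall_sum_pow_smul_eq_zero [Infinite K] [AddCommGroup V] [Module K V]
    {N : ℕ} {c : ℕ → V} (h : ∀ t : K, ∑ i ∈ Finset.range N, t ^ i • c i = 0) {l : ℕ}
    (hl : l < N) : c l = 0 := by
  rw [← Module.forall_dual_apply_eq_zero_iff K]
  intro φ
  have hp : ∑ i ∈ Finset.range N, monomial i (φ (c i)) = 0 := by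
    refine Polynomial.funext fun t => ?_
    simpa [eval_finsetSum, mul_comm] using congrArg φ (h t)
  simpa [finsetSum_coeff, coeff_monomial, hl] using congrArg (coeff · l) hp

variable [Ring R] [Algebra K R]

lemma eval_algebraMap_eq_sum_range {p : R[X]} {N : ℕ} (hN : p.natDegree < N) (t : K) :
    p.eval (algebraMap K R t) = ∑ i ∈ Finset.range N, t ^ i • p.coeff i := by
  simp only [eval_eq_sum_range' hN, ← map_pow, Algebra.smul_def, Algebra.commutes]

lemma map_coeff_of_forall_map_eval [Infinite K] (D : R →ₗ[K] R) {f p : R[X]}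
    (h : ∀ t : K, D (f.eval (algebraMap K R t)) = p.eval (algebraMap K R t)) (l : ℕ) :
    D (f.coeff l) = p.coeff l := by
  let N := max (max f.natDegree p.natDegree) l + 1
  refine sub_eq_zero.1 (eq_zero_of_forall_sum_pow_smul_eq_zero (K := K) (N := N)
    (c := fun i => D (f.coeff i) - p.coeff i) (fun t => ?_) (by omega))
  have ht := h t
  rw [eval_algebraMap_eq_sum_range (N := N) (by omega),
    eval_algebraMap_eq_sum_range (N := N) (by omega), map_sum] at ht
  simpa [smul_sub, sub_eq_zero] using ht

end CoefficientComparison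

namespace DolbeaultAlgebra

section Parity

/-- The subalgebra generated by the forms of even total degree, the natural home of the entries
of the inhomogeneous matrix `Θ + tθ²`. -/
def evenSubalgebra (A : DolbeaultAlgebra Ω) : Subalgebra ℂ Ω :=
  Algebra.adjoin ℂ {a | ∃ p q, Even (p + q) ∧ a ∈ A.deg p q}

variable {A : DolbeaultAlgebra Ω} {p q : ℕ} {a b : Ω}

lemma mem_evenSubalgebra (h : Even (p + q)) (ha : a ∈ A.deg p q) : a ∈ A.evenSubalgebra :=
  Algebra.subset_adjoin ⟨p, q, h, ha⟩

lemma commute_of_mem_evenSubalgebra (ha : a ∈ A.evenSubalgebra) (hb : b ∈ A.deg p q) :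
    Commute b a := by
  refine Algebra.commute_of_mem_adjoin_of_forall_mem_commute ha ?_
  rintro x ⟨p', q', heven, hx⟩
  rw [Commute, SemiconjBy, A.gcomm b x hb hx, (heven.mul_left _).neg_one_pow, one_smul]

instance (A : DolbeaultAlgebra Ω) : IsMulCommutative A.evenSubalgebra :=
  Algebra.isMulCommutative_adjoin ℂ fun _ ha _ ⟨_, _, _, hb⟩ =>
    (commute_of_mem_evenSubalgebra (Algebra.subset_adjoin ha) hb).symm

lemma mul_eq_neg_mul_of_odd {p' q' : ℕ} (ha : a ∈ A.deg p q) (hb : b ∈ A.deg p' q')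
    (hp : Odd (p + q)) (hp' : Odd (p' + q')) : a * b = -(b * a) := by
  rw [A.gcomm a b ha hb, (hp.mul hp').neg_one_pow, neg_one_smul]

end Parity

section GradedDerivation

/-- The graded Leibniz rule with respect to total degree, the part of the axioms that `∂` and `∂̄`
share. -/
def IsGradedDerivation (A : DolbeaultAlgebra Ω) (D : Ω →ₗ[ℂ] Ω) : Prop :=
  ∀ ⦃p q : ℕ⦄ (a b : Ω), a ∈ A.deg p q → D (a * b) = D a * b + ((-1 : ℂ) ^ (p + q)) • (a * D b)

variable {A : DolbeaultAlgebra Ω} {D : Ω →ₗ[ℂ] Ω} {r : ℕ}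

lemma isGradedDerivation_pd (A : DolbeaultAlgebra Ω) : A.IsGradedDerivation A.pd :=
  fun _ _ => A.pd_leibniz

lemma isGradedDerivation_pdb (A : DolbeaultAlgebra Ω) : A.IsGradedDerivation A.pdb :=
  fun _ _ => A.pdb_leibniz

namespace IsGradedDerivation

lemma map_one (hD : A.IsGradedDerivation D) : D 1 = 0 := by
  simpa using hD 1 1 A.one_mem

lemma leibniz_of_mem_evenSubalgebra (hD : A.IsGradedDerivation D) {a : Ω}
    (ha : a ∈ A.evenSubalgebra) (b : Ω) : D (a * b) = D a * b + a * D b := by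
  induction ha using Algebra.adjoin_induction generalizing b with
  | mem x hx =>
    obtain ⟨p, q, heven, hx⟩ := hx
    rw [hD x b hx, heven.neg_one_pow, one_smul]
  | algebraMap c => simp [Algebra.algebraMap_eq_smul_one, hD.map_one]
  | add x y _ _ hx hy => rw [add_mul, map_add, hx, hy, map_add]; noncomm_ring
  | mul x y _ _ hx hy => rw [mul_assoc, hx, hy, hx]; noncomm_ring

lemma mapMatrix_mul_of_mem_even (hD : A.IsGradedDerivation D) {M : Matrix (Fin r) (Fin r) Ω}
    (hM : M ∈ A.evenSubalgebra.matrix) (N : Matrix (Fin r) (Fin r) Ω) :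
    D.mapMatrix (M * N) = D.mapMatrix M * N + M * D.mapMatrix N := by
  simpa using mapMatrix_mul_of_leibniz D 1 M N fun i j k => by
    simpa using hD.leibniz_of_mem_evenSubalgebra (hM i j) (N j k)

lemma mapMatrix_mul_of_matDeg (hD : A.IsGradedDerivation D) {p q : ℕ}
    {M : Matrix (Fin r) (Fin r) Ω} (hM : A.MatDeg p q M) (N : Matrix (Fin r) (Fin r) Ω) :
    D.mapMatrix (M * N) = D.mapMatrix M * N + ((-1 : ℂ) ^ (p + q)) • (M * D.mapMatrix N) :=
  mapMatrix_mul_of_leibniz D _ M N fun i j _ => hD _ _ (hM i j)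

lemma mapMatrix_pow_of_eq_lie (hD : A.IsGradedDerivation D) {X θ : Matrix (Fin r) (Fin r) Ω}
    (hX : X ∈ A.evenSubalgebra.matrix) {s : ℂ} (h : D.mapMatrix X = s • ⁅X, θ⁆) (n : ℕ) :
    D.mapMatrix (X ^ n) = s • ⁅X ^ n, θ⁆ := by
  simp only [Ring.lie_def] at h ⊢
  induction n with
  | zero => ext i j; simp [Matrix.one_apply, apply_ite D, hD.map_one]
  | succ n ih =>
    rw [pow_succ, hD.mapMatrix_mul_of_mem_even (pow_mem hX n), ih, h, smul_mul_assoc,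
      mul_smul_comm, ← smul_add]
    noncomm_ring

end IsGradedDerivation

end GradedDerivation

section TraceIdentities

variable {A : DolbeaultAlgebra Ω} {r : ℕ} {θ X : Matrix (Fin r) (Fin r) Ω}

lemma trace_mul_mul_self_of_odd {p q : ℕ} (hθ : A.MatDeg p q θ) (hodd : Odd (p + q))
    (hX : X ∈ A.evenSubalgebra.matrix) : (θ * (X * θ)).trace = -(θ * θ * X).trace := by
  rw [← mul_assoc, trace_mul_eq_neg_of_anticommute, ← mul_assoc]
  intro i j
  simp only [Matrix.mul_apply, Finset.sum_mul, Finset.mul_sum, ← Finset.sum_neg_distrib]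
  refine Finset.sum_congr rfl fun k _ => ?_
  have hcomm : Commute (θ j i) (X k j) := commute_of_mem_evenSubalgebra (hX k j) (hθ j i)
  rw [mul_assoc, ← hcomm.eq, ← mul_assoc, mul_eq_neg_mul_of_odd (hθ i k) (hθ j i) hodd hodd,
    neg_mul, mul_assoc]

lemma IsGradedDerivation.map_trace_mul_pow {D : Ω →ₗ[ℂ] Ω} (hD : A.IsGradedDerivation D) {p q : ℕ}
    (hθ : A.MatDeg p q θ) (hodd : Odd (p + q)) (hX : X ∈ A.evenSubalgebra.matrix) {s : ℂ}
    (h : D.mapMatrix X = s • ⁅X, θ⁆) (n : ℕ) :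
    D (θ * X ^ n).trace =
      (D.mapMatrix θ * X ^ n).trace + (2 * s) • (θ * θ * X ^ n).trace := by
  have htrace : (θ * ⁅X ^ n, θ⁆).trace = (-2 : ℂ) • (θ * θ * X ^ n).trace := by
    rw [Ring.lie_def, mul_sub, Matrix.trace_sub,
      trace_mul_mul_self_of_odd hθ hodd (pow_mem hX n), ← mul_assoc]
    module
  calc D (θ * X ^ n).trace
      = (D.mapMatrix (θ * X ^ n)).trace := AddMonoidHom.map_trace D _
    _ = (D.mapMatrix θ * X ^ n).trace - s • (θ * ⁅X ^ n, θ⁆).trace := by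
      rw [hD.mapMatrix_mul_of_matDeg hθ, hD.mapMatrix_pow_of_eq_lie hX h, hodd.neg_one_pow,
        mul_smul_comm, neg_one_smul, ← sub_eq_add_neg, Matrix.trace_sub, Matrix.trace_smul]
    _ = _ := by rw [htrace]; module

end TraceIdentities

section Connection

variable {A : DolbeaultAlgebra Ω} {r : ℕ} {θ : Matrix (Fin r) (Fin r) Ω}

lemma mpd_eq_mapMatrix (A : DolbeaultAlgebra Ω) (M : Matrix (Fin r) (Fin r) Ω) :
    A.mpd M = A.pd.mapMatrix M := rfl

lemma mpdb_eq_mapMatrix (A : DolbeaultAlgebra Ω) (M : Matrix (Fin r) (Fin r) Ω) :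
    A.mpdb M = A.pdb.mapMatrix M := rfl

lemma mpdb_mpdb (M : Matrix (Fin r) (Fin r) Ω) : A.mpdb (A.mpdb M) = 0 := by
  ext i j
  exact A.pdb_pdb (M i j)

lemma mpd_mpdb (M : Matrix (Fin r) (Fin r) Ω) : A.mpd (A.mpdb M) = -A.mpdb (A.mpd M) := by
  ext i j
  exact eq_neg_of_add_eq_zero_left (A.pd_pdb (M i j))

lemma lie_add_smul_mul_self (Θ θ : Matrix (Fin r) (Fin r) Ω) (t : ℂ) :
    ⁅Θ + t • (θ * θ), θ⁆ = ⁅Θ, θ⁆ := by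
  simp only [Ring.lie_def, add_mul, mul_add, smul_mul_assoc, mul_smul_comm, mul_assoc]
  abel

section StructureEquations

variable (hθ : A.MatDeg 1 0 θ) (hpd : A.mpd θ = -(θ * θ))
include hθ

lemma mpdb_mem_even : A.mpdb θ ∈ A.evenSubalgebra.matrix := fun i j =>
  mem_evenSubalgebra (by decide) (A.pdb_mem (hθ i j))

lemma mul_self_mem_even : θ * θ ∈ A.evenSubalgebra.matrix := fun i j => by
  rw [Matrix.mul_apply]
  exact sum_mem fun k _ => mem_evenSubalgebra (by decide) (A.mul_mem (hθ i k) (hθ k j))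

lemma mpdb_add_smul_mem_even (t : ℂ) : A.mpdb θ + t • (θ * θ) ∈ A.evenSubalgebra.matrix :=
  add_mem (mpdb_mem_even hθ) (Subalgebra.smul_mem _ (mul_self_mem_even hθ) t)

lemma mpdb_mul_self : A.mpdb (θ * θ) = ⁅A.mpdb θ, θ⁆ := by
  rw [mpdb_eq_mapMatrix, A.isGradedDerivation_pdb.mapMatrix_mul_of_matDeg hθ, Nat.add_zero,
    pow_one, neg_one_smul, ← sub_eq_add_neg, Ring.lie_def, mpdb_eq_mapMatrix]

lemma mpdb_mpdb_add_smul (t : ℂ) :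
    A.mpdb (A.mpdb θ + t • (θ * θ)) = t • ⁅A.mpdb θ + t • (θ * θ), θ⁆ := by
  rw [lie_add_smul_mul_self, mpdb_eq_mapMatrix, map_add, map_smul, ← mpdb_eq_mapMatrix,
    ← mpdb_eq_mapMatrix, mpdb_mpdb, zero_add, mpdb_mul_self hθ]

lemma pdb_trace_mul_pow (n : ℕ) (t : ℂ) :
    A.pdb (θ * (A.mpdb θ + t • (θ * θ)) ^ n).trace =
      ((A.mpdb θ + t • (θ * θ)) ^ (n + 1)).trace +
        t • (θ * θ * (A.mpdb θ + t • (θ * θ)) ^ n).trace := by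
  rw [A.isGradedDerivation_pdb.map_trace_mul_pow hθ (by decide) (mpdb_add_smul_mem_even hθ t)
    (mpdb_mpdb_add_smul hθ t), ← mpdb_eq_mapMatrix, pow_succ', add_mul, Matrix.trace_add,
    smul_mul_assoc, Matrix.trace_smul]
  module

include hpd

lemma mpd_mul_self : A.mpd (θ * θ) = 0 := by
  rw [mpd_eq_mapMatrix, A.isGradedDerivation_pd.mapMatrix_mul_of_matDeg hθ, ← mpd_eq_mapMatrix,
    hpd]
  simp [mul_assoc]

lemma mpd_mpdb_add_smul (t : ℂ) :
    A.mpd (A.mpdb θ + t • (θ * θ)) = ⁅A.mpdb θ + t • (θ * θ), θ⁆ := by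
  have hbianchi : A.mpd (A.mpdb θ) = ⁅A.mpdb θ, θ⁆ := by
    rw [mpd_mpdb, hpd, mpdb_eq_mapMatrix, map_neg, neg_neg, ← mpdb_eq_mapMatrix, mpdb_mul_self hθ]
  rw [lie_add_smul_mul_self, mpd_eq_mapMatrix, map_add, map_smul, ← mpd_eq_mapMatrix,
    ← mpd_eq_mapMatrix, hbianchi, mpd_mul_self hθ hpd, smul_zero, add_zero]

lemma pd_trace_mul_pow (n : ℕ) (t : ℂ) :
    A.pd (θ * (A.mpdb θ + t • (θ * θ)) ^ n).trace =
      (θ * θ * (A.mpdb θ + t • (θ * θ)) ^ n).trace := by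
  have hlie := (mpd_mpdb_add_smul hθ hpd t).trans (one_smul ℂ _).symm
  rw [A.isGradedDerivation_pd.map_trace_mul_pow hθ (by decide) (mpdb_add_smul_mem_even hθ t) hlie,
    ← mpd_eq_mapMatrix, hpd, neg_mul, Matrix.trace_neg]
  module

end StructureEquations

section Coefficients

variable {n : ℕ} {f : Polynomial Ω} (hθ : A.MatDeg 1 0 θ)
  (hf : ∀ t : ℂ, f.eval (algebraMap ℂ Ω t) = (θ * (A.mpdb θ + t • (θ * θ)) ^ n).trace)
include hθ hf

lemma pdb_coeff_zero : A.pdb (f.coeff 0) = (A.mpdb θ ^ (n + 1)).trace := by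
  have hf0 := hf 0
  have htrace := pdb_trace_mul_pow hθ n 0
  rw [map_zero, ← coeff_zero_eq_eval_zero] at hf0
  rw [hf0, htrace, zero_smul, zero_smul, add_zero, add_zero]

lemma pdb_coeff_succ (hpd : A.mpd θ = -(θ * θ)) (l : ℕ) :
    A.pdb (f.coeff (l + 1)) =
      (((n + 1 : ℕ) + (l + 1 : ℕ)) / (l + 1 : ℕ) : ℂ) • A.pd (f.coeff l) := by
  obtain ⟨G, H, hderiv, hG, hH⟩ := exists_polynomial_eval_eq_trace A.evenSubalgebra
    (mpdb_mem_even hθ) (mul_self_mem_even hθ) n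
  have hpdf : A.pd (f.coeff l) = H.coeff l :=
    map_coeff_of_forall_map_eval A.pd (fun t => by rw [hf, pd_trace_mul_pow hθ hpd, hH]) l
  have hpdbf : A.pdb (f.coeff (l + 1)) = (G + H * X).coeff (l + 1) := by
    refine map_coeff_of_forall_map_eval A.pdb (fun t => ?_) (l + 1)
    rw [hf, pdb_trace_mul_pow hθ, eval_add, eval_mul_X, hG, hH, ← Algebra.commutes,
      ← Algebra.smul_def]
  have hGH : ((l + 1 : ℕ) : ℂ) • G.coeff (l + 1) = ((n + 1 : ℕ) : ℂ) • H.coeff l := by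
    have h := congrArg (coeff · l) hderiv
    simp only [coeff_derivative, coeff_smul] at h
    rw [Nat.cast_smul_eq_nsmul, Nat.cast_smul_eq_nsmul, ← h, nsmul_eq_mul', Nat.cast_succ]
  have hl : ((l + 1 : ℕ) : ℂ) ≠ 0 := Nat.cast_ne_zero.2 l.succ_ne_zero
  rw [hpdbf, hpdf, coeff_add, coeff_mul_X, add_div, div_self hl, add_smul, one_smul,
    div_eq_inv_mul, mul_smul, ← hGH, inv_smul_smul₀ hl]

end Coefficients

end Connection

end DolbeaultAlgebra

open DolbeaultAlgebra

/-- Fix `k ≥ 1` and let `a l` (for `0 ≤ l ≤ k-1`) be the coefficients of the expansion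
`Tr(θ(Θ + tθ²)^(k-1)) = ∑_{l=0}^{k-1} a_l tˡ`. Then `∂̄a₀ = Tr(Θᵏ)`,
`∂̄a_l = ((k+l)/l) ∂a_(l-1)` for `1 ≤ l ≤ k-1`, and `∂a_(k-1) = 0`. -/
theorem stmt5
    (A : DolbeaultAlgebra Ω) (r : ℕ) (hr : 1 ≤ r)
    (θ Θ : Matrix (Fin r) (Fin r) Ω)
    (hθdeg : A.MatDeg 1 0 θ) (hθpd : A.mpd θ = -(θ * θ)) (hΘ : Θ = A.mpdb θ)
    (k : ℕ) (hk : 1 ≤ k) (a : ℕ → Ω)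
    (ha : ∀ t : ℂ, Matrix.trace (θ * (Θ + t • (θ * θ)) ^ (k - 1)) =
      ∑ l ∈ Finset.range k, t ^ l • a l) :
    A.pdb (a 0) = Matrix.trace (Θ ^ k) ∧
    (∀ l : ℕ, 1 ≤ l → l + 1 ≤ k →
      A.pdb (a l) = (((k : ℂ) + (l : ℂ)) / (l : ℂ)) • A.pd (a (l - 1))) ∧
    A.pd (a (k - 1)) = 0 := by
  subst hΘ
  obtain ⟨n, rfl⟩ := Nat.exists_eq_add_of_le' hk
  let f : Polynomial Ω := ∑ l ∈ Finset.range (n + 1), Polynomial.monomial l (a l)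
  have hf (t : ℂ) : f.eval (algebraMap ℂ Ω t) =
      (θ * (A.mpdb θ + t • (θ * θ)) ^ n).trace := by
    simpa [f, eval_finsetSum, ← map_pow, Algebra.smul_def, Algebra.commutes] using (ha t).symm
  have hcoeff {l : ℕ} (hl : l < n + 1) : f.coeff l = a l := by
    simp [f, finsetSum_coeff, coeff_monomial, hl]
  refine ⟨?_, fun l hl hlk => ?_, ?_⟩
  · rw [← hcoeff n.succ_pos, pdb_coeff_zero hθdeg hf]
  · obtain ⟨m, rfl⟩ := Nat.exists_eq_add_of_le' hl
    rw [← hcoeff hlk, Nat.add_sub_cancel, ← hcoeff (Nat.lt_of_succ_lt hlk),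
      pdb_coeff_succ hθdeg hf hθpd]
  · have htop : f.coeff (n + 1) = 0 := by simp [f, finsetSum_coeff, coeff_monomial]
    have h := pdb_coeff_succ hθdeg hf hθpd n
    rw [htop, map_zero, hcoeff n.lt_succ_self, eq_comm, smul_eq_zero] at h
    refine h.resolve_left (div_ne_zero ?_ ?_) <;> norm_cast
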